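/- For every integer d ≥ 0 and every positive integer ν: S(ν+d+1, ν) = Σ_{i=1}^{ν} i·S(i+d, i), where S denotes the Stirling number of the second kind. -/

import Mathlib

/-- The Stirling number of the second kind `S(p, q)`: the number of partitions of a
set with `p` elements into `q` nonempty blocks. -/
noncomputable def stirlingSecond (p q : ℕ) : ℕ :=
  Nat.card {P : Finpartition (Finset.univ : Finset (Fin p)) // P.parts.card = q}

/-!
A partition of `insert a s` is a partition of `s` together with a choice of where `a` goes: into
one of the existing blocks, or into a block of its own. Summing over these choices shows that the
number of partitions with a given number of blocks obeys the recurrence defining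
`Nat.stirlingSecond`, namely `S(n + 1, k + 1) = (k + 1) S(n, k + 1) + S(n, k)`. Applied to
`S(ν + d + 1, ν)` the recurrence splits off the summand `ν S(ν + d, ν)` and leaves
`S((ν - 1) + d + 1, ν - 1)`, so the sum telescopes.
-/

open Finset

theorem mem_parts_restrict {α : Type*} [DistribLattice α] [OrderBot α] [DecidableEq α]
    {a b c : α} (P : Finpartition a) (hb : b ≤ a) :
    c ∈ (P.restrict hb).parts ↔ c ≠ ⊥ ∧ ∃ d ∈ P.parts, d ⊓ b = c := by
  simp [Finpartition.restrict]

section InsertPoint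

variable {α : Type*} [DecidableEq α] {s t : Finset α} {a : α}

/-- The partition of `insert a s` obtained from a partition `P` of `s` by adding the new point `a`
to the block `t` of `P`. Taking `t = ∅` makes `{a}` a block of its own; a general `t ⊆ s` is first
cut out of the blocks of `P`. -/
def insertIntoPart (P : Finpartition s) (ha : a ∉ s) (hts : t ⊆ s) :
    Finpartition (insert a s) :=
  (P.avoid t).extend (b := insert a t) (insert_ne_empty a t)
    (disjoint_insert_right.2 ⟨fun h ↦ ha (mem_sdiff.1 h).1, sdiff_disjoint⟩)
    (by rw [sup_eq_union, union_insert, sdiff_union_of_subset hts])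

theorem subset_of_mem_insert_empty_parts (P : Finpartition s) (ht : t ∈ insert ∅ P.parts) :
    t ⊆ s := by
  obtain rfl | ht := mem_insert.1 ht
  · exact empty_subset s
  · exact P.subset ht

theorem parts_avoid_of_mem_insert_empty_parts (P : Finpartition s)
    (ht : t ∈ insert ∅ P.parts) : (P.avoid t).parts = P.parts.erase t := by
  have sdiff_eq_self : ∀ u ∈ P.parts, u ≠ t → u \ t = u := by
    intro u hu hut
    obtain rfl | ht := mem_insert.1 ht
    · exact sdiff_empty
    · exact sdiff_eq_self_of_disjoint (P.disjoint hu ht hut)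
  have not_subset : ∀ u ∈ P.parts, u ≠ t → ¬u ⊆ t := fun u hu hut hsub ↦
    P.ne_empty hu (by rw [← sdiff_eq_self u hu hut, sdiff_eq_empty_iff_subset.2 hsub])
  ext u
  simp only [Finpartition.mem_avoid, mem_erase]
  constructor
  · rintro ⟨v, hv, hvt, rfl⟩
    have hne : v ≠ t := fun h ↦ hvt h.subset
    rw [sdiff_eq_self v hv hne]
    exact ⟨hne, hv⟩
  · rintro ⟨hut, hu⟩
    exact ⟨u, hu, not_subset u hu hut, sdiff_eq_self u hu hut⟩

theorem parts_insertIntoPart (P : Finpartition s) (ha : a ∉ s) (ht : t ∈ insert ∅ P.parts) :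
    (insertIntoPart P ha (subset_of_mem_insert_empty_parts P ht)).parts =
      insert (insert a t) (P.parts.erase t) := by
  rw [insertIntoPart, Finpartition.extend_parts, parts_avoid_of_mem_insert_empty_parts P ht]

theorem card_parts_insertIntoPart (P : Finpartition s) (ha : a ∉ s) (ht : t ∈ insert ∅ P.parts) :
    #(insertIntoPart P ha (subset_of_mem_insert_empty_parts P ht)).parts =
      if t = ∅ then #P.parts + 1 else #P.parts := by
  rw [insertIntoPart, Finpartition.card_extend, parts_avoid_of_mem_insert_empty_parts P ht]
  split_ifs with h
  · rw [h, erase_eq_of_notMem P.empty_notMem_parts]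
  · exact card_erase_add_one (mem_of_mem_insert_of_ne ht h)

theorem part_insertIntoPart_self (P : Finpartition s) (ha : a ∉ s) (hts : t ⊆ s) :
    (insertIntoPart P ha hts).part a = insert a t :=
  Finpartition.part_eq_of_mem _ (mem_insert_self _ _) (mem_insert_self a t)

theorem restrict_insertIntoPart (P : Finpartition s) (ha : a ∉ s)
    (ht : t ∈ insert ∅ P.parts) :
    (insertIntoPart P ha (subset_of_mem_insert_empty_parts P ht)).restrict (subset_insert a s) =
      P := by
  have hts := subset_of_mem_insert_empty_parts P ht
  have inter_eq : insert a t ∩ s = t := by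
    rw [insert_inter_of_notMem ha, inter_eq_left.2 hts]
  have inter_eq_self : ∀ u ∈ P.parts, u ∩ s = u := fun u hu ↦ inter_eq_left.2 (P.subset hu)
  have ne_empty : ∀ u ∈ P.parts, u ≠ ∅ := fun u hu ↦ P.ne_empty hu
  ext u
  simp only [mem_parts_restrict, parts_insertIntoPart P ha ht, bot_eq_empty, inf_eq_inter]
  grind

theorem erase_part_self_subset (Q : Finpartition (insert a s)) : (Q.part a).erase a ⊆ s :=
  subset_insert_iff.1 (Q.part_subset a)

theorem part_self_inter_eq_erase (Q : Finpartition (insert a s)) (ha : a ∉ s) :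
    Q.part a ∩ s = (Q.part a).erase a := by
  have := erase_part_self_subset Q
  grind

theorem erase_part_self_mem_insert_empty_parts_restrict (Q : Finpartition (insert a s))
    (ha : a ∉ s) :
    (Q.part a).erase a ∈ insert ∅ (Q.restrict (subset_insert a s)).parts := by
  rw [mem_insert, mem_parts_restrict, or_iff_not_imp_left]
  exact fun hne ↦ ⟨hne, Q.part a, Q.part_mem.2 (mem_insert_self a s), part_self_inter_eq_erase Q ha⟩

theorem insertIntoPart_restrict (Q : Finpartition (insert a s)) (ha : a ∉ s) :
    insertIntoPart (Q.restrict (subset_insert a s)) ha (erase_part_self_subset Q) = Q := by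
  have self_mem_part : a ∈ Q.part a := Q.mem_part (mem_insert_self a s)
  have part_mem : Q.part a ∈ Q.parts := Q.part_mem.2 (mem_insert_self a s)
  have inter_eq_self : ∀ u ∈ Q.parts, u ≠ Q.part a → u ∩ s = u := by
    intro u hu hne
    have notMem : a ∉ u := fun hau ↦ hne (Q.part_eq_of_mem hu hau).symm
    exact inter_eq_left.2 ((subset_insert_iff_of_notMem notMem).1 (Q.subset hu))
  have ne_erase_part : ∀ u ∈ Q.parts, u ≠ Q.part a → u ≠ (Q.part a).erase a := by
    rintro u hu hne rfl
    obtain ⟨x, hx⟩ := Q.nonempty_of_mem_parts hu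
    exact hne (Q.eq_of_mem_parts hu part_mem hx (mem_of_mem_erase hx))
  ext u
  rw [parts_insertIntoPart _ ha (erase_part_self_mem_insert_empty_parts_restrict Q ha),
    insert_erase self_mem_part, mem_insert, mem_erase, mem_parts_restrict]
  constructor
  · rintro (rfl | ⟨hne, -, v, hv, rfl⟩)
    · exact part_mem
    · have hv_ne : v ≠ Q.part a := by
        rintro rfl
        exact hne (part_self_inter_eq_erase Q ha)
      rwa [inf_eq_inter, inter_eq_self v hv hv_ne]
  · intro hu
    rw [or_iff_not_imp_left]
    exact fun hne ↦ ⟨ne_erase_part u hu hne, Q.ne_empty hu, u, hu, inter_eq_self u hu hne⟩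

/-- A partition of `insert a s` amounts to a partition of `s` together with the block that `a`
joins, where `∅` stands for a new block. -/
def finpartitionInsertEquiv (ha : a ∉ s) :
    Finpartition (insert a s) ≃ Σ P : Finpartition s, ↥(insert ∅ P.parts) where
  toFun Q := ⟨Q.restrict (subset_insert a s), (Q.part a).erase a,
    erase_part_self_mem_insert_empty_parts_restrict Q ha⟩
  invFun x := insertIntoPart x.1 ha (subset_of_mem_insert_empty_parts x.1 x.2.2)
  left_inv Q := insertIntoPart_restrict Q ha
  right_inv := by
    rintro ⟨P, t, ht⟩
    have hts := subset_of_mem_insert_empty_parts P ht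
    refine Sigma.subtype_ext (restrict_insertIntoPart P ha ht) ?_
    simp only [part_insertIntoPart_self, erase_insert (notMem_mono hts ha)]

theorem sum_finpartition_insert {M : Type*} [AddCommMonoid M] (ha : a ∉ s) (f : ℕ → M) :
    ∑ Q : Finpartition (insert a s), f #Q.parts =
      ∑ P : Finpartition s, (f (#P.parts + 1) + #P.parts • f #P.parts) := by
  rw [← (finpartitionInsertEquiv ha).symm.sum_comp, Fintype.sum_sigma]
  refine sum_congr rfl fun P _ ↦ ?_
  calc ∑ t : ↥(insert ∅ P.parts), f #((finpartitionInsertEquiv ha).symm ⟨P, t⟩).parts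
    _ = ∑ t : ↥(insert ∅ P.parts), f (if t.1 = ∅ then #P.parts + 1 else #P.parts) :=
      sum_congr rfl fun t _ ↦ congrArg f (card_parts_insertIntoPart P ha t.2)
    _ = ∑ t ∈ insert ∅ P.parts, f (if t = ∅ then #P.parts + 1 else #P.parts) :=
      sum_coe_sort _ fun t ↦ f (if t = ∅ then #P.parts + 1 else #P.parts)
    _ = f (#P.parts + 1) + ∑ _t ∈ P.parts, f #P.parts := by
      rw [sum_insert P.empty_notMem_parts, if_pos rfl]
      exact congrArg _ (sum_congr rfl fun t ht ↦ by rw [if_neg (P.ne_empty ht)])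
    _ = f (#P.parts + 1) + #P.parts • f #P.parts := by rw [sum_const]

theorem card_finpartition_insert_card_parts_eq_succ (ha : a ∉ s) (k : ℕ) :
    #{Q : Finpartition (insert a s) | #Q.parts = k + 1} =
      (k + 1) * #{P : Finpartition s | #P.parts = k + 1} +
        #{P : Finpartition s | #P.parts = k} := by
  simp only [card_filter]
  rw [sum_finpartition_insert ha fun n ↦ if n = k + 1 then 1 else 0, sum_add_distrib, add_comm,
    mul_sum]
  congr 1
  · refine sum_congr rfl fun P _ ↦ ?_
    split_ifs with h <;> simp [h]
  · simp only [add_left_inj]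

end InsertPoint

theorem card_finpartition_card_parts_eq {α : Type*} [DecidableEq α] (s : Finset α) (k : ℕ) :
    #{P : Finpartition s | #P.parts = k} = Nat.stirlingSecond #s k := by
  induction s using Finset.induction_on generalizing k with
  | empty =>
    have : Unique (Finpartition (∅ : Finset α)) := inferInstanceAs (Unique (Finpartition ⊥))
    have card_parts (P : Finpartition (∅ : Finset α)) : #P.parts = 0 :=
      card_eq_zero.2 (Finpartition.parts_eq_empty_iff.2 rfl)
    cases k <;> simp [card_parts]
  | insert a s ha ih =>
    rw [card_insert_of_notMem ha]
    cases k with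
    | zero => simp
    | succ k =>
      rw [card_finpartition_insert_card_parts_eq_succ ha, ih, ih, Nat.stirlingSecond_succ_succ]

theorem stirlingSecond_eq_nat_stirlingSecond (p q : ℕ) :
    stirlingSecond p q = Nat.stirlingSecond p q := by
  rw [stirlingSecond, Nat.card_eq_fintype_card, Fintype.card_subtype,
    card_finpartition_card_parts_eq, card_univ, Fintype.card_fin]

/-- For every `d ≥ 0` and every positive integer `ν`:
`S(ν+d+1, ν) = Σ_{i=1}^{ν} i · S(i+d, i)`. -/
theorem stirling_recursion (d ν : ℕ) (hν : 1 ≤ ν) :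
    stirlingSecond (ν + d + 1) ν = ∑ i ∈ Finset.Icc 1 ν, i * stirlingSecond (i + d) i := by
  simp only [stirlingSecond_eq_nat_stirlingSecond]
  induction ν, hν using Nat.le_induction with
  | base => simp [Nat.stirlingSecond_one_right, add_comm 1 d]
  | succ n hn ih =>
    rw [sum_Icc_succ_top (Nat.le_add_left 1 n), ← ih, Nat.stirlingSecond_succ_succ,
      add_right_comm n 1 d, add_comm]
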